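/- For every integer k ≥ 2, the graph K_{2k-1}⁻ (the complete graph on 2k-1 vertices with one edge removed) has a fractional K_k-decomposition. -/

import Mathlib

/-- `c` is a copy of `H` in `G`, i.e. a subgraph of `G` isomorphic to `H`. -/
def SimpleGraph.Subgraph.IsCopy {α β : Type*} {G : SimpleGraph α} (c : G.Subgraph)
    (H : SimpleGraph β) : Prop :=
  Nonempty (c.coe ≃g H)

/-- A fractional `H`-decomposition of `G`: an assignment of nonnegative real weights to the
copies of `H` in `G` such that for each edge `e` of `G`, the sum of the weights of the copies
of `H` containing `e` equals `1`. -/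
def IsFracDecomp {α β : Type*} (G : SimpleGraph α) (H : SimpleGraph β)
    (ψ : G.Subgraph → ℝ) : Prop :=
  (∀ c, 0 ≤ ψ c) ∧ (∀ c, ¬ c.IsCopy H → ψ c = 0) ∧
  ∀ e ∈ G.edgeSet, (∑ᶠ c ∈ {c : G.Subgraph | c.IsCopy H ∧ e ∈ c.edgeSet}, ψ c) = 1

/-!
Let `u`, `v` be the ends of the missing edge and give the same weight to every `k`-clique that
contains exactly one of them. An edge at `u` or `v` lies in `C(2k-4, k-2)` of these cliques, an
edge avoiding both in `2 * C(2k-5, k-3)`, and by Pascal's rule and symmetry both numbers are the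
central binomial coefficient of order `k - 2`. So the weight `C(2k-4, k-2)⁻¹` works.
-/

section

open Finset

variable {V : Type*}

theorem isFracDecomp_indicator_of_uniform_cover {W : Type*} {G : SimpleGraph V}
    {H : SimpleGraph W} {𝒞 : Set G.Subgraph} {d : ℕ} (hd : d ≠ 0) (h𝒞 : ∀ c ∈ 𝒞, c.IsCopy H)
    (hcover : ∀ e ∈ G.edgeSet, {c ∈ 𝒞 | e ∈ c.edgeSet}.ncard = d) :
    IsFracDecomp G H (𝒞.indicator fun _ ↦ (d : ℝ)⁻¹) := by
  refine ⟨Set.indicator_nonneg fun _ _ ↦ by positivity,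
    fun c hc ↦ Set.indicator_of_notMem (fun h ↦ hc (h𝒞 c h)) _, fun e he ↦ ?_⟩
  have hcopies : {c | c.IsCopy H ∧ e ∈ c.edgeSet} ∩ 𝒞 = {c ∈ 𝒞 | e ∈ c.edgeSet} := by
    ext c
    exact ⟨fun h ↦ ⟨h.2, h.1.2⟩, fun h ↦ ⟨⟨h𝒞 c h.1, h.2⟩, h.1⟩⟩
  calc ∑ᶠ c ∈ {c | c.IsCopy H ∧ e ∈ c.edgeSet}, 𝒞.indicator (fun _ ↦ (d : ℝ)⁻¹) c
      = ∑ᶠ c ∈ {c ∈ 𝒞 | e ∈ c.edgeSet}, (d : ℝ)⁻¹ := by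
        rw [finsum_mem_def, Set.indicator_indicator, hcopies, ← finsum_mem_def]
    _ = d * (d : ℝ)⁻¹ := by
        have hfin := Set.finite_of_ncard_ne_zero ((hcover e he).trans_ne hd)
        rw [finsum_mem_eq_finite_toFinset_sum _ hfin, sum_const, nsmul_eq_mul,
          ← Set.ncard_eq_toFinset_card _ hfin, hcover e he]
    _ = 1 := mul_inv_cancel₀ (Nat.cast_ne_zero.mpr hd)

theorem isCopy_induce_top_of_isNClique {G : SimpleGraph V} {k : ℕ} {S : Finset V}
    (hS : G.IsNClique k S) :
    ((⊤ : G.Subgraph).induce (S : Set V)).IsCopy (⊤ : SimpleGraph (Fin k)) := by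
  have hcoe : ((⊤ : G.Subgraph).induce (S : Set V)).coe = ⊤ :=
    (G.induce_eq_coe_induce_top S).symm.trans (SimpleGraph.induce_eq_top.mpr hS.isClique)
  rw [SimpleGraph.Subgraph.IsCopy, hcoe]
  exact ⟨.completeGraph (S.equivFinOfCardEq hS.card_eq)⟩

theorem exists_isFracDecomp_of_uniform_isNClique_cover [DecidableEq V] {G : SimpleGraph V}
    {k d : ℕ} {𝒜 : Finset (Finset V)} (hd : d ≠ 0) (h𝒜 : ∀ S ∈ 𝒜, G.IsNClique k S)
    (hcover : ∀ x y, G.Adj x y → #{S ∈ 𝒜 | {x, y} ⊆ S} = d) :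
    ∃ ψ : G.Subgraph → ℝ, IsFracDecomp G (⊤ : SimpleGraph (Fin k)) ψ := by
  let cliqueOn (S : Finset V) : G.Subgraph := (⊤ : G.Subgraph).induce (S : Set V)
  have cliqueOn_injective : cliqueOn.Injective := fun S T h ↦
    coe_injective (congrArg SimpleGraph.Subgraph.verts h)
  refine ⟨_, isFracDecomp_indicator_of_uniform_cover (𝒞 := cliqueOn '' 𝒜) hd ?_ ?_⟩
  · rintro _ ⟨S, hS, rfl⟩
    exact isCopy_induce_top_of_isNClique (h𝒜 S hS)
  · intro e
    induction e with | _ x y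
    intro hxy
    have hcliques : {c ∈ cliqueOn '' 𝒜 | s(x, y) ∈ c.edgeSet} =
        cliqueOn '' ({S ∈ 𝒜 | {x, y} ⊆ S} : Finset (Finset V)) := by
      have hedge (S : Finset V) : s(x, y) ∈ (cliqueOn S).edgeSet ↔ {x, y} ⊆ S := by
        have : G.Adj x y := hxy
        simp [cliqueOn, insert_subset_iff, this]
      ext c
      constructor
      · rintro ⟨⟨S, hS, rfl⟩, hc⟩
        exact ⟨S, mem_filter.mpr ⟨hS, (hedge S).mp hc⟩, rfl⟩
      · rintro ⟨S, hS, rfl⟩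
        exact ⟨⟨S, (mem_filter.mp hS).1, rfl⟩, (hedge S).mpr (mem_filter.mp hS).2⟩
    rw [hcliques, Set.ncard_image_of_injective _ cliqueOn_injective, Set.ncard_coe_finset,
      hcover x y hxy]

variable [Fintype V] [DecidableEq V] {k : ℕ} {u v : V} {A : Finset V}

/-- The `k`-sets of vertices separating `u` from `v`, that is, containing exactly one of them. They
are the cliques that receive positive weight when `uv` is the missing edge. -/
def separatingSets (k : ℕ) (u v : V) : Finset (Finset V) :=
  {S ∈ univ.powersetCard k | Xor (u ∈ S) (v ∈ S)}

theorem mem_separatingSets {S : Finset V} :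
    S ∈ separatingSets k u v ↔ #S = k ∧ Xor (u ∈ S) (v ∈ S) := by
  simp [separatingSets]

theorem separatingSets_comm (k : ℕ) (u v : V) : separatingSets k u v = separatingSets k v u := by
  simp only [separatingSets, xor_comm]

theorem isNClique_deleteEdges_of_mem_separatingSets {S : Finset V}
    (hS : S ∈ separatingSets k u v) :
    ((⊤ : SimpleGraph V).deleteEdges {s(u, v)}).IsNClique k S := by
  obtain ⟨hcard, hsep⟩ := mem_separatingSets.mp hS
  refine ⟨fun x hx y hy hxy ↦ ?_, hcard⟩
  rw [SimpleGraph.deleteEdges_adj, Set.mem_singleton_iff, Sym2.eq_iff]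
  refine ⟨hxy, ?_⟩
  rintro (⟨rfl, rfl⟩ | ⟨rfl, rfl⟩) <;> grind

theorem card_separatingSets_filter_superset_of_mem (huA : u ∈ A) (hvA : v ∉ A) (hA : #A ≤ k) :
    #{S ∈ separatingSets k u v | A ⊆ S} =
      (Fintype.card V - 1 - #A).choose (k - #A) := by
  have hsets : {S ∈ separatingSets k u v | A ⊆ S} =
      {S ∈ (univ.erase v).powersetCard k | A ⊆ S} := by
    ext S
    simp only [mem_filter, mem_separatingSets, mem_powersetCard, subset_erase, subset_univ]
    grind
  rw [hsets, card_filter_powersetCard_subset A _ k (subset_erase.mpr ⟨subset_univ A, hvA⟩) hA,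
    card_erase_of_mem (mem_univ v), card_univ]

theorem card_separatingSets_filter_superset_of_notMem (huv : u ≠ v) (huA : u ∉ A) (hvA : v ∉ A)
    (hA : #A < k) :
    #{S ∈ separatingSets k u v | A ⊆ S} =
      2 * (Fintype.card V - 1 - (#A + 1)).choose (k - (#A + 1)) := by
  have hsplit : {S ∈ separatingSets k u v | A ⊆ S} =
      {S ∈ separatingSets k u v | insert u A ⊆ S} ∪
        {S ∈ separatingSets k v u | insert v A ⊆ S} := by
    ext S
    simp only [mem_filter, mem_union, mem_separatingSets, insert_subset_iff]
    grind
  have hdisj : Disjoint {S ∈ separatingSets k u v | insert u A ⊆ S}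
      {S ∈ separatingSets k v u | insert v A ⊆ S} := by
    rw [disjoint_left]
    simp only [mem_filter, mem_separatingSets, insert_subset_iff]
    grind
  rw [hsplit, card_union_of_disjoint hdisj,
    card_separatingSets_filter_superset_of_mem (mem_insert_self u A)
      (by simp [huv.symm, hvA]) (by rwa [card_insert_of_notMem huA]),
    card_separatingSets_filter_superset_of_mem (mem_insert_self v A)
      (by simp [huv, huA]) (by rwa [card_insert_of_notMem hvA]),
    card_insert_of_notMem huA, card_insert_of_notMem hvA, two_mul]

theorem centralBinom_succ_eq_two_mul_choose (n : ℕ) :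
    (n + 1).centralBinom = 2 * (2 * n + 1).choose n := by
  rw [Nat.centralBinom_eq_two_mul_choose, mul_add_one, Nat.choose_succ_succ', Nat.choose_symm_half,
    two_mul ((2 * n + 1).choose n)]

theorem card_separatingSets_filter_superset_of_card_eq_two (hV : Fintype.card V = 2 * k - 1)
    (huv : u ≠ v) (hA : #A = 2) (huvA : ¬ (u ∈ A ∧ v ∈ A)) :
    #{S ∈ separatingSets k u v | A ⊆ S} = (k - 2).centralBinom := by
  have hk : 2 ≤ k := by
    have := Fintype.one_lt_card_iff.mpr ⟨u, v, huv⟩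
    lia
  have card_of_mem {a b : V} (ha : a ∈ A) (hb : b ∉ A) :
      #{S ∈ separatingSets k a b | A ⊆ S} = (k - 2).centralBinom := by
    rw [card_separatingSets_filter_superset_of_mem ha hb (by lia), hV, hA,
      Nat.centralBinom_eq_two_mul_choose]
    congr 1
    lia
  by_cases hu : u ∈ A
  · exact card_of_mem hu fun hv ↦ huvA ⟨hu, hv⟩
  by_cases hv : v ∈ A
  · rw [separatingSets_comm]
    exact card_of_mem hv hu
  have hk' : 3 ≤ k := by
    have := card_le_univ (insert u (insert v A))
    rw [card_insert_of_notMem (by simp [huv, hu]), card_insert_of_notMem hv] at this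
    lia
  obtain ⟨r, rfl⟩ := Nat.exists_eq_add_of_le' hk'
  rw [card_separatingSets_filter_superset_of_notMem huv hu hv (by lia), hV, hA,
    show r + 3 - 2 = r + 1 by lia, centralBinom_succ_eq_two_mul_choose]
  congr 2

end

theorem frac_kk_decomposition_of_complete_minus_edge_general {V : Type*} [Fintype V]
    {k : ℕ} {u v : V} (hV : Fintype.card V = 2 * k - 1) (huv : u ≠ v) :
    ∃ ψ : ((⊤ : SimpleGraph V).deleteEdges {s(u, v)}).Subgraph → ℝ,
      IsFracDecomp ((⊤ : SimpleGraph V).deleteEdges {s(u, v)}) (⊤ : SimpleGraph (Fin k)) ψ := by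
  classical
  refine exists_isFracDecomp_of_uniform_isNClique_cover (𝒜 := separatingSets k u v)
    (Nat.centralBinom_ne_zero (k - 2)) (fun _ ↦ isNClique_deleteEdges_of_mem_separatingSets) ?_
  intro x y hxy
  obtain ⟨hne, hmissing⟩ := SimpleGraph.deleteEdges_adj.mp hxy
  refine card_separatingSets_filter_superset_of_card_eq_two hV huv (Finset.card_pair hne) ?_
  rw [Set.mem_singleton_iff, Sym2.eq_iff] at hmissing
  grind

/-- For every integer `k ≥ 2`, the graph `K_{2k-1}⁻` (the complete graph on `2k-1` vertices
with one edge removed) has a fractional `K_k`-decomposition. -/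
theorem frac_kk_decomposition_of_complete_minus_edge (k : ℕ) (hk : 2 ≤ k) :
    ∃ ψ : ((⊤ : SimpleGraph (Fin (2 * k - 1))).deleteEdges
        {s((⟨0, by omega⟩ : Fin (2 * k - 1)), (⟨1, by omega⟩ : Fin (2 * k - 1)))}).Subgraph → ℝ,
      IsFracDecomp ((⊤ : SimpleGraph (Fin (2 * k - 1))).deleteEdges
        {s((⟨0, by omega⟩ : Fin (2 * k - 1)), (⟨1, by omega⟩ : Fin (2 * k - 1)))})
        (⊤ : SimpleGraph (Fin k)) ψ := by
  exact frac_kk_decomposition_of_complete_minus_edge_general (by simp) (by simp)
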